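/- arXiv:1407.1258 — 3 statements merged into one kernel-verified Lean document; each statement's English description precedes it below -/
import Mathlib

section
/- Let C ≠ 0, a, b, c be real constants with c ≠ 0, and set f(u) = C·((u+b)² + c²)²·exp((4a/c)·arctan((u+b)/c)). Let u(t,x) be a smooth real-valued solution of the gKN equation with f, such that u_x(t,x) ≠ 0 for all (t,x). Then the function P(t,x) = ((u(t,x)+b)² + c²) + 3at·u_t(t,x) + ax·u_x(t,x) satisfies the symmetry determining equation ∂_t P − ∂_x³ P + 3(u_xx/u_x)∂_x² P − (3/2)(u_xx²/u_x²)∂_x P + (f(u)/u_x²)∂_x P − (f'(u)/u_x)P = 0 at every point (t,x). (This is the point symmetry X_{3e} = −3at∂_t − ax∂_x + ((u+b)²+c²)∂_u of the gKN equation.) -/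
open Real

/-- Partial derivative with respect to the second (spatial) variable. -/
noncomputable def pdx (u : ℝ → ℝ → ℝ) : ℝ → ℝ → ℝ := fun t x => deriv (fun y => u t y) x

/-- Partial derivative with respect to the first (time) variable. -/
noncomputable def pdt (u : ℝ → ℝ → ℝ) : ℝ → ℝ → ℝ := fun t x => deriv (fun s => u s x) t

/-- `u` solves the generalized Krichever-Novikov equation with nonlinearity `f`:
`u_t = u_xxx - (3/2) u_xx^2/u_x + f(u)/u_x`. -/
def isGKN (f : ℝ → ℝ) (u : ℝ → ℝ → ℝ) : Prop :=
  ∀ t x, pdt u t x =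
    pdx (pdx (pdx u)) t x - (3/2) * (pdx (pdx u) t x)^2 / pdx u t x + f (u t x) / pdx u t x

/-- The symmetry determining equation for a characteristic function `P` along `u`:
`∂_t P - ∂_x^3 P + 3 (u_xx/u_x) ∂_x^2 P - (3/2)(u_xx^2/u_x^2) ∂_x P + (f(u)/u_x^2) ∂_x P
 - (f'(u)/u_x) P = 0`. -/
def symmDet (f : ℝ → ℝ) (u P : ℝ → ℝ → ℝ) : Prop :=
  ∀ t x,
    pdt P t x - pdx (pdx (pdx P)) t x
      + 3 * (pdx (pdx u) t x / pdx u t x) * pdx (pdx P) t x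
      - (3/2) * ((pdx (pdx u) t x)^2 / (pdx u t x)^2) * pdx P t x
      + (f (u t x) / (pdx u t x)^2) * pdx P t x
      - (deriv f (u t x) / pdx u t x) * P t x = 0

section PartialDerivatives

variable {w : ℝ → ℝ → ℝ}

lemma hasDerivAt_fderiv_snd (hw : ContDiff ℝ (⊤ : ℕ∞) (Function.uncurry w)) (t x : ℝ) :
    HasDerivAt (fun y => w t y) (fderiv ℝ (Function.uncurry w) (t, x) (0, 1)) x := by
  have h := ((hw.differentiable (by simp)) (t, x)).hasFDerivAt
  exact h.comp_hasDerivAt x ((hasDerivAt_const x t).prodMk (hasDerivAt_id x))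

lemma hasDerivAt_fderiv_fst (hw : ContDiff ℝ (⊤ : ℕ∞) (Function.uncurry w)) (t x : ℝ) :
    HasDerivAt (fun s => w s x) (fderiv ℝ (Function.uncurry w) (t, x) (1, 0)) t := by
  have h := ((hw.differentiable (by simp)) (t, x)).hasFDerivAt
  exact h.comp_hasDerivAt t ((hasDerivAt_id t).prodMk (hasDerivAt_const t x))

lemma hasDerivAt_pdx (hw : ContDiff ℝ (⊤ : ℕ∞) (Function.uncurry w)) (t x : ℝ) :
    HasDerivAt (fun y => w t y) (pdx w t x) x :=
  (hasDerivAt_fderiv_snd hw t x).differentiableAt.hasDerivAt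

lemma hasDerivAt_pdt (hw : ContDiff ℝ (⊤ : ℕ∞) (Function.uncurry w)) (t x : ℝ) :
    HasDerivAt (fun s => w s x) (pdt w t x) t :=
  (hasDerivAt_fderiv_fst hw t x).differentiableAt.hasDerivAt

lemma uncurry_pdx (hw : ContDiff ℝ (⊤ : ℕ∞) (Function.uncurry w)) :
    Function.uncurry (pdx w) = fun p => fderiv ℝ (Function.uncurry w) p (0, 1) :=
  funext fun p => (hasDerivAt_fderiv_snd hw p.1 p.2).deriv

lemma uncurry_pdt (hw : ContDiff ℝ (⊤ : ℕ∞) (Function.uncurry w)) :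
    Function.uncurry (pdt w) = fun p => fderiv ℝ (Function.uncurry w) p (1, 0) :=
  funext fun p => (hasDerivAt_fderiv_fst hw p.1 p.2).deriv

lemma contDiff_pdx (hw : ContDiff ℝ (⊤ : ℕ∞) (Function.uncurry w)) :
    ContDiff ℝ (⊤ : ℕ∞) (Function.uncurry (pdx w)) := by
  rw [uncurry_pdx hw]
  exact (hw.fderiv_right (by simp)).clm_apply contDiff_const

lemma contDiff_pdt (hw : ContDiff ℝ (⊤ : ℕ∞) (Function.uncurry w)) :
    ContDiff ℝ (⊤ : ℕ∞) (Function.uncurry (pdt w)) := by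
  rw [uncurry_pdt hw]
  exact (hw.fderiv_right (by simp)).clm_apply contDiff_const

/-- Mixed partial derivatives of a smooth function commute. -/
lemma pdt_pdx_comm (hw : ContDiff ℝ (⊤ : ℕ∞) (Function.uncurry w)) :
    pdt (pdx w) = pdx (pdt w) := by
  funext t x
  have hd : DifferentiableAt ℝ (fderiv ℝ (Function.uncurry w)) (t, x) :=
    (hw.fderiv_right (m := (⊤ : ℕ∞)) (by simp)).differentiable (by simp) _
  have hs : IsSymmSndFDerivAt ℝ (Function.uncurry w) (t, x) :=
    hw.contDiffAt.isSymmSndFDerivAt (by simpa using WithTop.coe_le_coe.2 (le_top : (2 : ℕ∞) ≤ ⊤))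
  have h₁ := (hasDerivAt_fderiv_fst (contDiff_pdx hw) t x).deriv
  have h₂ := (hasDerivAt_fderiv_snd (contDiff_pdt hw) t x).deriv
  rw [uncurry_pdx hw, fderiv_clm_apply hd (by fun_prop)] at h₁
  rw [uncurry_pdt hw, fderiv_clm_apply hd (by fun_prop)] at h₂
  simp at h₁ h₂
  exact h₁.trans ((hs _ _).trans h₂.symm)

end PartialDerivatives

lemma hasDerivAt_X3e_nonlinearity (C a b c : ℝ) (hc : c ≠ 0) (v : ℝ) :
    HasDerivAt
      (fun v => C * ((v + b)^2 + c^2)^2 * Real.exp ((4 * a / c) * Real.arctan ((v + b) / c)))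
      (C * ((v + b)^2 + c^2) * (4 * (v + b) + 4 * a)
        * Real.exp ((4 * a / c) * Real.arctan ((v + b) / c))) v := by
  have hlin : HasDerivAt (fun v : ℝ => v + b) 1 v := (hasDerivAt_id v).add_const b
  have hq := (((hlin.pow 2).add_const (c^2)).pow 2).const_mul C
  have he := (((hlin.div_const c).arctan).const_mul (4 * a / c)).exp
  refine (hq.mul he).congr_deriv ?_
  have h₁ : (v + b)^2 + c^2 ≠ 0 := by positivity
  have h₂ : 1 + ((v + b) / c)^2 = ((v + b)^2 + c^2) / c^2 := by field_simp; ring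
  rw [h₂]
  simp only [Pi.pow_apply]
  field_simp
  ring

/-- If `f' φ = 2 φ' f + 4 a f` with `φ(v) = (v + b)² + c²`, then `φ(u) + 3 a t u_t + a x u_x`
satisfies the symmetry determining equation along any solution `u`. -/
lemma symmDet_of_deriv_mul_eq {f f' : ℝ → ℝ} {a b c : ℝ} (hf : ∀ v, HasDerivAt f (f' v) v)
    (hf' : ∀ v, f' v * ((v + b)^2 + c^2) = 4 * (v + b) * f v + 4 * a * f v)
    {u : ℝ → ℝ → ℝ} (hu : ContDiff ℝ (⊤ : ℕ∞) (Function.uncurry u))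
    (hux : ∀ t x, pdx u t x ≠ 0) (hsol : isGKN f u) :
    symmDet f u
      (fun t x => ((u t x + b)^2 + c^2) + 3 * a * t * pdt u t x + a * x * pdx u t x) := by
  have hu₁ := contDiff_pdx hu
  have hu₂ := contDiff_pdx hu₁
  have hu₃ := contDiff_pdx hu₂
  have hv := contDiff_pdt hu
  have hv₁ := contDiff_pdx hv
  have hv₂ := contDiff_pdx hv₁
  have hPx : pdx (fun t x => ((u t x + b)^2 + c^2) + 3 * a * t * pdt u t x + a * x * pdx u t x)
      = fun t x => 2 * (u t x + b) * pdx u t x + 3 * a * t * pdx (pdt u) t x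
        + a * pdx u t x + a * x * pdx (pdx u) t x := by
    funext t x
    refine ((((((hasDerivAt_pdx hu t x).add_const b).pow 2).add_const (c^2)).add
      ((hasDerivAt_pdx hv t x).const_mul (3 * a * t))).add
      (((hasDerivAt_id x).const_mul a).mul (hasDerivAt_pdx hu₁ t x))).deriv.trans ?_
    simp
    ring
  have hPxx : pdx (fun t x => 2 * (u t x + b) * pdx u t x + 3 * a * t * pdx (pdt u) t x
        + a * pdx u t x + a * x * pdx (pdx u) t x)
      = fun t x => 2 * pdx u t x ^ 2 + 2 * (u t x + b) * pdx (pdx u) t x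
        + 3 * a * t * pdx (pdx (pdt u)) t x
        + 2 * a * pdx (pdx u) t x + a * x * pdx (pdx (pdx u)) t x := by
    funext t x
    refine (((((((hasDerivAt_pdx hu t x).add_const b).const_mul 2).mul
      (hasDerivAt_pdx hu₁ t x)).add
      ((hasDerivAt_pdx hv₁ t x).const_mul (3 * a * t))).add
      ((hasDerivAt_pdx hu₁ t x).const_mul a)).add
      (((hasDerivAt_id x).const_mul a).mul (hasDerivAt_pdx hu₂ t x))).deriv.trans ?_
    simp
    ring
  have hPxxx : pdx (fun t x => 2 * pdx u t x ^ 2 + 2 * (u t x + b) * pdx (pdx u) t x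
        + 3 * a * t * pdx (pdx (pdt u)) t x
        + 2 * a * pdx (pdx u) t x + a * x * pdx (pdx (pdx u)) t x)
      = fun t x => 6 * pdx u t x * pdx (pdx u) t x + 2 * (u t x + b) * pdx (pdx (pdx u)) t x
        + 3 * a * t * pdx (pdx (pdx (pdt u))) t x
        + 3 * a * pdx (pdx (pdx u)) t x + a * x * pdx (pdx (pdx (pdx u))) t x := by
    funext t x
    refine ((((((hasDerivAt_pdx hu₁ t x).pow 2).const_mul 2).add
      ((((hasDerivAt_pdx hu t x).add_const b).const_mul 2).mul
      (hasDerivAt_pdx hu₂ t x))).add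
      ((hasDerivAt_pdx hv₂ t x).const_mul (3 * a * t))).add
      ((hasDerivAt_pdx hu₂ t x).const_mul (2 * a))).add
      (((hasDerivAt_id x).const_mul a).mul (hasDerivAt_pdx hu₃ t x)) |>.deriv.trans ?_
    simp
    ring
  have hPt : pdt (fun t x => ((u t x + b)^2 + c^2) + 3 * a * t * pdt u t x + a * x * pdx u t x)
      = fun t x => 2 * (u t x + b) * pdt u t x + 3 * a * pdt u t x
        + 3 * a * t * pdt (pdt u) t x + a * x * pdx (pdt u) t x := by
    funext t x
    refine ((((((hasDerivAt_pdt hu t x).add_const b).pow 2).add_const (c^2)).add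
      (((hasDerivAt_id t).const_mul (3 * a)).mul (hasDerivAt_pdt hv t x))).add
      ((hasDerivAt_pdt hu₁ t x).const_mul (a * x))).deriv.trans ?_
    simp [pdt_pdx_comm hu]
    ring
  intro t x
  have hne := hux t x
  have hut := hsol t x
  have hutx : pdx (pdt u) t x = _ :=
    (congrArg (fun g : ℝ → ℝ => deriv g x) (funext fun y => hsol t y)).trans
    (((hasDerivAt_pdx hu₃ t x).sub
      ((((hasDerivAt_pdx hu₂ t x).pow 2).const_mul (3/2)).div (hasDerivAt_pdx hu₁ t x) hne)).add
      (((hf (u t x)).comp x (hasDerivAt_pdx hu t x)).div (hasDerivAt_pdx hu₁ t x) hne)).deriv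
  have hutt : pdt (pdt u) t x = _ :=
    (congrArg (fun g : ℝ → ℝ => deriv g t) (funext fun s => hsol s x)).trans
    (((hasDerivAt_pdt hu₃ t x).sub
      ((((hasDerivAt_pdt hu₂ t x).pow 2).const_mul (3/2)).div (hasDerivAt_pdt hu₁ t x) hne)).add
      (((hf (u t x)).comp t (hasDerivAt_pdt hu t x)).div (hasDerivAt_pdt hu₁ t x) hne)).deriv
  rw [pdt_pdx_comm hu₂, pdt_pdx_comm hu₁, pdt_pdx_comm hu] at hutt
  have hfu := hf' (u t x)
  simp only [Function.comp_apply, Pi.pow_apply, Nat.cast_ofNat, Nat.add_one_sub_one, pow_one]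
    at hutx hutt
  rw [hPx, hPxx, hPxxx, hPt, (hf (u t x)).deriv]
  simp only
  have hf'' : f' (u t x) / pdx u t x * ((u t x + b)^2 + c^2)
      = (4 * (u t x + b) * f (u t x) + 4 * a * f (u t x)) / pdx u t x := by
    rw [← hfu]; ring
  linear_combination (norm := skip) 3 * a * t * hutt + a * x * hutx +
    (2 * (u t x + b) + 3 * a) * hut - hf''
  field_simp
  ring

/-- Point symmetry `X₃e = -3at ∂_t - ax ∂_x + ((u+b)²+c²) ∂_u` of the gKN equation with
`f(u) = C ((u+b)²+c²)² exp((4a/c) arctan((u+b)/c))`: its characteristic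
`P = ((u+b)²+c²) + 3at u_t + ax u_x` satisfies the symmetry determining equation. -/
theorem gKN_point_symmetry_X3e (C a b c : ℝ) (hC : C ≠ 0) (hc : c ≠ 0)
    (u : ℝ → ℝ → ℝ) (hu : ContDiff ℝ (⊤ : ℕ∞) (Function.uncurry u))
    (hux : ∀ t x, pdx u t x ≠ 0)
    (hsol : isGKN
      (fun v => C * ((v + b)^2 + c^2)^2 * Real.exp ((4 * a / c) * Real.arctan ((v + b) / c))) u) :
    symmDet
      (fun v => C * ((v + b)^2 + c^2)^2 * Real.exp ((4 * a / c) * Real.arctan ((v + b) / c))) u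
      (fun t x => ((u t x + b)^2 + c^2) + 3 * a * t * pdt u t x + a * x * pdx u t x) :=
  symmDet_of_deriv_mul_eq (hasDerivAt_X3e_nonlinearity C a b c hc) (fun v => by ring) hu hux hsol
end

section
/- Let f(u) = C₁u⁴ + C₂u³ + C₃u² + C₄u + C₅ be a quartic polynomial with real coefficients. Let u(t,x) be a smooth real-valued solution of the gKN equation with f, such that u_x(t,x) ≠ 0 for all (t,x). Define P(t,x) = u_xxxxx − 5·u_xxxx·u_xx/u_x − (5/2)·u_xxx²/u_x + (25/2)·u_xxx·u_xx²/u_x² − (45/8)·u_xx⁴/u_x³ − (5/3)·u_xxx·f(u)/u_x² + (25/6)·u_xx²·f(u)/u_x³ − (5/3)·u_xx·f'(u)/u_x − (5/18)·f(u)²/u_x³ + (5/9)·u_x·f''(u), where all derivatives of u are evaluated at (t,x). Then P satisfies the symmetry determining equation ∂_t P − ∂_x³ P + 3(u_xx/u_x)∂_x² P − (3/2)(u_xx²/u_x²)∂_x P + (f(u)/u_x²)∂_x P − (f'(u)/u_x)P = 0 at every point (t,x). (This is the fifth-order local symmetry of the Krichever–Novikov equation.) -/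
open Real

open scoped ContDiff
open Polynomial

theorem Derivation.map_ofNat_eq_zero {R A : Type*} [CommRing R] [CommRing A] [Algebra R A]
    (D : Derivation R A A) (n : ℕ) [n.AtLeastTwo] : D (ofNat(n) : A) = 0 :=
  D.map_natCast n

set_option maxRecDepth 8000 in
/-- The fifth-order symmetry as a polynomial identity in a differential ring with two commuting
derivations. Here `v` stands for `u_xx / (2 u_x)` and, with `f = 18 p`, `hᵢ` stands for
`p⁽ⁱ⁾(u) u_x ^ (i - 2)`; in these variables no division is needed. -/
theorem differentialRing_fifth_order_symmetry {R A : Type*} [CommRing R] [CommRing A] [Algebra R A]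
    (Dx Dt : Derivation R A A) {u₁ v h₀ h₁ h₂ h₃ h₄ K : A}
    (hK : K = Dx v - v ^ 2 + 9 * h₀)
    (xu : Dx u₁ = 2 * v * u₁) (xh₀ : Dx h₀ = h₁ - 4 * v * h₀) (xh₁ : Dx h₁ = h₂ - 2 * v * h₁)
    (xh₂ : Dx h₂ = h₃) (xh₃ : Dx h₃ = h₄ + 2 * v * h₃) (xh₄ : Dx h₄ = 4 * v * h₄)
    (comm : ∀ a, Dt (Dx a) = Dx (Dt a))
    (tu : Dt u₁ = u₁ * (4 * v * K + 2 * Dx K)) (tv : Dt v = Dx (2 * v * K + Dx K))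
    (th₀ : Dt h₀ = 2 * K * h₁ - 2 * h₀ * (4 * v * K + 2 * Dx K))
    (th₁ : Dt h₁ = 2 * K * h₂ - h₁ * (4 * v * K + 2 * Dx K))
    (th₂ : Dt h₂ = 2 * K * h₃) {P : A}
    (hP : P = u₁ * (2 * Dx (Dx (Dx v)) - 4 * v * Dx (Dx v) + 2 * Dx v ^ 2 - 12 * v ^ 2 * Dx v
      + 6 * v ^ 4 - 60 * Dx v * h₀ + 180 * v ^ 2 * h₀ - 60 * v * h₁ - 90 * h₀ ^ 2 + 10 * h₂)) :
    Dt P - Dx (Dx (Dx P)) + 6 * v * Dx (Dx P) - 6 * v ^ 2 * Dx P + 18 * h₀ * Dx P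
      - 18 * h₁ * P = 0 := by
  subst hP hK
  simp only [pow_succ, pow_zero, one_mul, map_add, map_sub, Derivation.leibniz, smul_eq_mul,
    Derivation.map_ofNat_eq_zero, comm, xu, xh₀, xh₁, xh₂, xh₃, xh₄, tu, tv, th₀, th₁, th₂,
    mul_zero, add_zero]
  ring

/-- The fifth-order symmetry in a differential algebra in which `u_x` is invertible, written in
terms of `v = u_xx / (2 u_x)` and `f = 18 p`. -/
theorem differentialAlgebra_fifth_order_symmetry {A : Type*} [CommRing A] [Algebra ℝ A]
    (Dx Dt : Derivation ℝ A A) (comm : ∀ a, Dt (Dx a) = Dx (Dt a)) {u r v : A} {p : ℝ[X]}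
    (hp : derivative (derivative (derivative (derivative (derivative p)))) = 0)
    (hr : r * Dx u = 1) (hv : Dx (Dx u) = 2 * v * Dx u)
    (hu : Dt u = 2 * Dx u * (Dx v - v ^ 2 + 9 * (aeval u p * r ^ 2))) {P : A}
    (hP : P = Dx u * (2 * Dx (Dx (Dx v)) - 4 * v * Dx (Dx v) + 2 * Dx v ^ 2 - 12 * v ^ 2 * Dx v
      + 6 * v ^ 4 - 60 * Dx v * (aeval u p * r ^ 2) + 180 * v ^ 2 * (aeval u p * r ^ 2)
      - 60 * v * (aeval u (derivative p) * r) - 90 * (aeval u p * r ^ 2) ^ 2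
      + 10 * aeval u (derivative (derivative p)))) :
    Dt P - Dx (Dx (Dx P)) + 6 * v * Dx (Dx P) - 6 * v ^ 2 * Dx P
      + 18 * (aeval u p * r ^ 2) * Dx P - 18 * (aeval u (derivative p) * r) * P = 0 := by
  obtain ⟨K, hK⟩ : ∃ K, K = Dx v - v ^ 2 + 9 * (aeval u p * r ^ 2) := ⟨_, rfl⟩
  rw [← hK] at hu
  have map_inv (D : Derivation ℝ A A) : D r = -r ^ 2 * D (Dx u) := by
    have h : D (r * Dx u) = 0 := by rw [hr]; exact D.map_one_eq_zero
    rw [Derivation.leibniz, smul_eq_mul, smul_eq_mul] at h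
    linear_combination r * h - D r * hr
  have xr : Dx r = -2 * v * r := by
    rw [map_inv, hv]; linear_combination -2 * v * r * hr
  have tu : Dt (Dx u) = Dx u * (4 * v * K + 2 * Dx K) := by
    rw [comm, hu]
    simp only [Derivation.leibniz, smul_eq_mul, Derivation.map_ofNat_eq_zero, hv]
    ring
  have tr : Dt r = -r * (4 * v * K + 2 * Dx K) := by
    rw [map_inv, tu]; linear_combination -r * (4 * v * K + 2 * Dx K) * hr
  have tv : Dt v = Dx (2 * v * K + Dx K) := by
    have h : Dt (Dx (Dx u)) = Dt (2 * v * Dx u) := by rw [hv]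
    have h4 : Dx (4 * v * K + 2 * Dx K) = 2 * Dx (2 * v * K + Dx K) := by
      simp only [map_add, Derivation.leibniz, smul_eq_mul, Derivation.map_ofNat_eq_zero]
      ring
    rw [comm, tu, Derivation.leibniz, Derivation.leibniz, Derivation.leibniz, tu, hv, h4] at h
    simp only [smul_eq_mul, Derivation.map_ofNat_eq_zero] at h
    have h2 : (2 : ℝ) • Dt v = (2 : ℝ) • Dx (2 * v * K + Dx K) := by
      simp only [ofNat_smul_eq_nsmul, nsmul_eq_mul, Nat.cast_ofNat]
      linear_combination -r * h + (2 * Dx (2 * v * K + Dx K) - 2 * Dt v) * hr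
    exact smul_right_injective A two_ne_zero h2
  refine differentialRing_fifth_order_symmetry Dx Dt
    (h₃ := aeval u (derivative (derivative (derivative p))) * Dx u)
    (h₄ := aeval u (derivative (derivative (derivative (derivative p)))) * Dx u ^ 2)
    hK hv ?_ ?_ ?_ ?_ ?_ comm tu tv ?_ ?_ ?_ hP
  all_goals
    simp only [pow_two, Derivation.leibniz, smul_eq_mul, Derivation.map_aeval, hv, xr, tr, hu, hp,
      map_zero]
  · linear_combination aeval u (derivative p) * r * hr
  · linear_combination aeval u (derivative (derivative p)) * hr
  · ring
  · ring
  · linear_combination 2 * K * aeval u (derivative p) * r * hr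
  · linear_combination 2 * K * aeval u (derivative (derivative p)) * hr
  · ring

section SmoothFunctions

variable (E : Type*) [NormedAddCommGroup E] [NormedSpace ℝ E]

/-- The algebra of smooth real-valued functions on a normed space. -/
def smoothFunctions : Subalgebra ℝ (E → ℝ) where
  carrier := {a | ContDiff ℝ ∞ a}
  mul_mem' ha hb := show ContDiff ℝ ∞ _ from ContDiff.mul (by exact ha) (by exact hb)
  add_mem' ha hb := show ContDiff ℝ ∞ _ from ContDiff.add (by exact ha) (by exact hb)
  algebraMap_mem' c := show ContDiff ℝ ∞ fun _ => c from contDiff_const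

variable {E}

theorem smoothFunctions.contDiff (a : smoothFunctions E) : ContDiff ℝ ∞ (a : E → ℝ) :=
  a.2

theorem smoothFunctions.differentiable (a : smoothFunctions E) : Differentiable ℝ (a : E → ℝ) :=
  (smoothFunctions.contDiff a).differentiable (by simp)

/-- Evaluation of smooth functions at a point. -/
def smoothFunctions.evalAt (q : E) : smoothFunctions E →ₐ[ℝ] ℝ :=
  (Pi.evalAlgHom ℝ (fun _ : E => ℝ) q).comp (smoothFunctions E).val

/-- The derivation of the algebra of smooth functions given by a constant vector field. -/
noncomputable def smoothFunctions.dirDeriv (e : E) :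
    Derivation ℝ (smoothFunctions E) (smoothFunctions E) :=
  Derivation.mk'
    { toFun := fun a => ⟨fun q => fderiv ℝ (a : E → ℝ) q e,
        show ContDiff ℝ ∞ _ from
          ((smoothFunctions.contDiff a).fderiv_right (m := ∞) (by simp)).clm_apply contDiff_const⟩
      map_add' := fun a b => Subtype.ext <| funext fun q => by
        simp [fderiv_add (differentiable a q) (differentiable b q)]
      map_smul' := fun c a => Subtype.ext <| funext fun q => by
        simp [fderiv_const_smul (differentiable a q)] }
    fun a b => Subtype.ext <| funext fun q => by
      simp [fderiv_mul (differentiable a q) (differentiable b q)]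

theorem smoothFunctions.ext_evalAt {a b : smoothFunctions E} (h : ∀ q, evalAt q a = evalAt q b) :
    a = b :=
  Subtype.ext (funext h)

theorem smoothFunctions.dirDeriv_comm (e e' : E) (a : smoothFunctions E) :
    dirDeriv e (dirDeriv e' a) = dirDeriv e' (dirDeriv e a) := by
  have second (d d' q : E) :
      evalAt q (dirDeriv d (dirDeriv d' a)) = fderiv ℝ (fderiv ℝ (a : E → ℝ)) q d d' := by
    have h : DifferentiableAt ℝ (fderiv ℝ (a : E → ℝ)) q :=
      (((smoothFunctions.contDiff a).fderiv_right (m := ∞) (by simp)).differentiable (by simp)) q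
    change fderiv ℝ (fun q => fderiv ℝ (a : E → ℝ) q d') q d = _
    rw [fderiv_clm_apply h (differentiableAt_const d')]
    simp
  refine ext_evalAt fun q => ?_
  rw [second, second]
  exact ((smoothFunctions.contDiff a).contDiffAt).isSymmSndFDerivAt
    (by simpa using WithTop.coe_le_coe.2 (le_top : (2 : ℕ∞) ≤ ⊤)) e e'

end SmoothFunctions

open smoothFunctions in
theorem pdx_evalAt (a : smoothFunctions (ℝ × ℝ)) :
    pdx (fun t x => evalAt (t, x) a) = fun t x => evalAt (t, x) (dirDeriv (0, 1) a) := by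
  funext t x
  have h : HasDerivAt (fun y : ℝ => (t, y)) (0, 1) x :=
    (hasDerivAt_const x t).prodMk (hasDerivAt_id x)
  exact ((differentiable a (t, x)).hasFDerivAt.comp_hasDerivAt x h).deriv

open smoothFunctions in
theorem pdt_evalAt (a : smoothFunctions (ℝ × ℝ)) :
    pdt (fun t x => evalAt (t, x) a) = fun t x => evalAt (t, x) (dirDeriv (1, 0) a) := by
  funext t x
  have h : HasDerivAt (fun s : ℝ => (s, x)) (1, 0) t :=
    (hasDerivAt_id t).prodMk (hasDerivAt_const t x)
  exact ((differentiable a (t, x)).hasFDerivAt.comp_hasDerivAt t h).deriv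

open smoothFunctions in
/-- The fifth-order local symmetry of the Krichever-Novikov equation (quartic `f`):
its characteristic `P` satisfies the symmetry determining equation. -/
theorem KN_fifth_order_symmetry (C₁ C₂ C₃ C₄ C₅ : ℝ) (f : ℝ → ℝ)
    (hf : ∀ v, f v = C₁ * v^4 + C₂ * v^3 + C₃ * v^2 + C₄ * v + C₅)
    (u : ℝ → ℝ → ℝ) (hu : ContDiff ℝ (⊤ : ℕ∞) (Function.uncurry u))
    (hux : ∀ t x, pdx u t x ≠ 0)
    (hsol : isGKN f u) :
    symmDet f u
      (fun t x =>
        (pdx (pdx (pdx (pdx (pdx u)))) t x) - 5 * (pdx (pdx (pdx (pdx u))) t x) * (pdx (pdx u) t x) / (pdx u t x) - (5/2) * (pdx (pdx (pdx u)) t x)^2 / (pdx u t x)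
        + (25/2) * (pdx (pdx (pdx u)) t x) * (pdx (pdx u) t x)^2 / (pdx u t x)^2 - (45/8) * (pdx (pdx u) t x)^4 / (pdx u t x)^3
        - (5/3) * (pdx (pdx (pdx u)) t x) * (f (u t x)) / (pdx u t x)^2 + (25/6) * (pdx (pdx u) t x)^2 * (f (u t x)) / (pdx u t x)^3
        - (5/3) * (pdx (pdx u) t x) * (deriv f (u t x)) / (pdx u t x) - (5/18) * (f (u t x))^2 / (pdx u t x)^3
        + (5/9) * (pdx u t x) * (deriv (deriv f) (u t x))) := by
  obtain ⟨D, T, comm, pdx_D, pdt_T⟩ :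
      ∃ D T : Derivation ℝ (smoothFunctions (ℝ × ℝ)) (smoothFunctions (ℝ × ℝ)),
        (∀ a, T (D a) = D (T a)) ∧
        (∀ a, pdx (fun t x => evalAt (t, x) a) = fun t x => evalAt (t, x) (D a)) ∧
        (∀ a, pdt (fun t x => evalAt (t, x) a) = fun t x => evalAt (t, x) (T a)) :=
    ⟨dirDeriv (0, 1), dirDeriv (1, 0), dirDeriv_comm _ _, pdx_evalAt, pdt_evalAt⟩
  obtain ⟨p, hfp, hp⟩ : ∃ p : ℝ[X], (f = fun v => 18 * p.eval v) ∧
      derivative (derivative (derivative (derivative (derivative p)))) = 0 := by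
    refine ⟨C (C₁ / 18) * X ^ 4 + C (C₂ / 18) * X ^ 3 + C (C₃ / 18) * X ^ 2 + C (C₄ / 18) * X
      + C (C₅ / 18), ?_, ?_⟩
    · funext v
      rw [hf]
      simp only [eval_add, eval_mul, eval_pow, eval_C, eval_X]
      ring
    · simp
  have hdf : deriv f = fun v => 18 * (derivative p).eval v := by
    funext v; simp [hfp]
  have hddf : deriv (deriv f) = fun v => 18 * (derivative (derivative p)).eval v := by
    funext v; simp [hdf]
  obtain ⟨U, rfl⟩ : ∃ U : smoothFunctions (ℝ × ℝ), u = fun t x => evalAt (t, x) U :=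
    ⟨⟨Function.uncurry u, hu⟩, rfl⟩
  have hne (q : ℝ × ℝ) : evalAt q (D U) ≠ 0 := by
    simpa only [pdx_D] using hux q.1 q.2
  obtain ⟨r, hr⟩ : ∃ r, r * D U = 1 :=
    ⟨⟨fun q => (evalAt q (D U))⁻¹, show ContDiff ℝ ∞ _ from (contDiff (D U)).inv hne⟩,
      Subtype.ext <| funext fun q => inv_mul_cancel₀ (hne q)⟩
  obtain ⟨v, hv⟩ : ∃ v, D (D U) = 2 * v * D U := by
    refine ⟨(1 / 2 : ℝ) • (D (D U) * r), ?_⟩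
    have h2 : (2 : smoothFunctions (ℝ × ℝ)) = algebraMap ℝ _ 2 := (map_ofNat _ 2).symm
    rw [h2, ← Algebra.smul_def, smul_smul, mul_one_div_cancel two_ne_zero, one_smul, mul_assoc, hr,
      mul_one]
  have hD₃ : D (D (D U)) = D U * (2 * D v + 4 * v ^ 2) := by
    simp only [hv, Derivation.leibniz, smul_eq_mul, Derivation.map_ofNat_eq_zero]
    ring
  have hD₄ : D (D (D (D U))) = D U * (2 * D (D v) + 12 * v * D v + 8 * v ^ 3) := by
    rw [hD₃]
    simp only [hv, Derivation.leibniz, smul_eq_mul, Derivation.map_ofNat_eq_zero, map_add,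
      pow_two]
    ring
  have hD₅ : D (D (D (D (D U)))) = D U * (2 * D (D (D v)) + 12 * D v ^ 2 + 16 * v * D (D v)
      + 48 * v ^ 2 * D v + 16 * v ^ 4) := by
    rw [hD₄]
    simp only [hv, Derivation.leibniz, smul_eq_mul, Derivation.map_ofNat_eq_zero, map_add,
      pow_succ, pow_zero, one_mul]
    ring
  have hre (q : ℝ × ℝ) : evalAt q r = (evalAt q (D U))⁻¹ :=
    eq_inv_of_mul_eq_one_left (by rw [← map_mul, hr, map_one])
  have hU : T U = 2 * D U * (D v - v ^ 2 + 9 * (aeval U p * r ^ 2)) := by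
    refine ext_evalAt fun ⟨t, x⟩ => ?_
    have h := hsol t x
    simp only [pdx_D, pdt_T] at h
    have := hne (t, x)
    rw [h, hD₃, hv, hfp]
    simp only [map_mul, map_add, map_sub, map_pow, map_ofNat, hre,
      ← aeval_algHom_apply, coe_aeval_eq_eval]
    field_simp
    ring
  obtain ⟨P, hPdef⟩ : ∃ P, P = D U * (2 * D (D (D v)) - 4 * v * D (D v) + 2 * D v ^ 2
      - 12 * v ^ 2 * D v + 6 * v ^ 4 - 60 * D v * (aeval U p * r ^ 2)
      + 180 * v ^ 2 * (aeval U p * r ^ 2) - 60 * v * (aeval U (derivative p) * r)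
      - 90 * (aeval U p * r ^ 2) ^ 2 + 10 * aeval U (derivative (derivative p))) := ⟨_, rfl⟩
  have hP := differentialAlgebra_fifth_order_symmetry D T comm hp hr hv hU hPdef
  have key : symmDet f (fun t x => evalAt (t, x) U) (fun t x => evalAt (t, x) P) := by
    intro t x
    have hn := hne (t, x)
    have h := congrArg (evalAt (t, x)) hP
    simp only [pdx_D, pdt_T]
    rw [map_zero] at h
    rw [← h, hdf, hfp]
    simp only [hv, map_mul, map_add, map_sub, map_pow, map_ofNat, hre, ← aeval_algHom_apply,
      coe_aeval_eq_eval]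
    field_simp
    ring
  convert key using 3 with t x
  have hn := hne (t, x)
  simp only [pdx_D]
  rw [hPdef, hD₅, hD₄, hD₃, hv, hddf, hdf, hfp]
  simp only [map_mul, map_add, map_sub, map_pow, map_ofNat, hre, ← aeval_algHom_apply,
    coe_aeval_eq_eval]
  field_simp
  ring
end

section
/- Let f(u) = C₁u⁴ + C₂u³ + C₃u² + C₄u + C₅ be a quartic polynomial with real coefficients and let u(t,x) be a smooth real-valued solution of the gKN equation with f, such that u_x(t,x) ≠ 0 for all (t,x). Define T₂ₐ(t,x) = (1/2)·u_xxx²/u_x² − (3/8)·u_xx⁴/u_x⁴ + (5/6)·u_xx²·f(u)/u_x⁴ + (1/18)·f(u)²/u_x⁴ − (5/9)·f''(u) and X₂ₐ(t,x) = −u_xxxxx·u_xxx/u_x² + (1/2)·u_xxxx²/u_x² + u_xxxx·u_xxx·u_xx/u_x³ + (1/6)·u_xxxx·u_xx·(9u_xx² − 10f(u))/u_x⁴ + 3·u_xxx³/u_x³ − (2/3)·u_xxx²·(9u_xx² − 2f(u))/u_x⁴ + (1/9)·u_xxx·(15u_xx² + 2f(u))·f(u)/u_x⁵ + (5/3)·u_xxx·u_xx·f'(u)/u_x³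 + (9/8)·u_xx⁶/u_x⁶ − (29/12)·u_xx⁴·f(u)/u_x⁶ − (1/6)·u_xx³·f'(u)/u_x⁴ + (19/18)·u_xx²·f(u)²/u_x⁶ − (5/6)·u_xx²·f''(u)/u_x² − (5/9)·u_xx·f(u)·f'(u)/u_x⁴ − (4/9)·u_xx·f'''(u) + (1/27)·f(u)³/u_x⁶ + (5/18)·(2f(u)f''(u) − f'(u)²)/u_x² + (2/9)·u_x²·f''''(u), where all derivatives of u are evaluated at (t,x). Then ∂_t T₂ₐ(t,x) + ∂_x X₂ₐ(t,x) = 0 at every point (t,x). -/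
open Real

/-- A conservation law: `∂_t T + ∂_x X = 0` at every point. -/
def consLaw (T X : ℝ → ℝ → ℝ) : Prop := ∀ t x, pdt T t x + pdx X t x = 0

/-- The conserved density `T₂ₐ`. -/
noncomputable def T2a (f : ℝ → ℝ) (u : ℝ → ℝ → ℝ) : ℝ → ℝ → ℝ := fun t x =>
  (1/2) * (pdx (pdx (pdx u)) t x)^2 / (pdx u t x)^2 - (3/8) * (pdx (pdx u) t x)^4 / (pdx u t x)^4
    + (5/6) * (pdx (pdx u) t x)^2 * (f (u t x)) / (pdx u t x)^4 + (1/18) * (f (u t x))^2 / (pdx u t x)^4 - (5/9) * (deriv (deriv f) (u t x))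

/-- The flux `X₂ₐ` corresponding to `T₂ₐ`. -/
noncomputable def X2a (f : ℝ → ℝ) (u : ℝ → ℝ → ℝ) : ℝ → ℝ → ℝ := fun t x =>
  -((pdx (pdx (pdx (pdx (pdx u)))) t x) * (pdx (pdx (pdx u)) t x) / (pdx u t x)^2) + (1/2) * (pdx (pdx (pdx (pdx u))) t x)^2 / (pdx u t x)^2
    + (pdx (pdx (pdx (pdx u))) t x) * (pdx (pdx (pdx u)) t x) * (pdx (pdx u) t x) / (pdx u t x)^3
    + (1/6) * (pdx (pdx (pdx (pdx u))) t x) * (pdx (pdx u) t x) * (9 * (pdx (pdx u) t x)^2 - 10 * (f (u t x))) / (pdx u t x)^4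
    + 3 * (pdx (pdx (pdx u)) t x)^3 / (pdx u t x)^3
    - (2/3) * (pdx (pdx (pdx u)) t x)^2 * (9 * (pdx (pdx u) t x)^2 - 2 * (f (u t x))) / (pdx u t x)^4
    + (1/9) * (pdx (pdx (pdx u)) t x) * (15 * (pdx (pdx u) t x)^2 + 2 * (f (u t x))) * (f (u t x)) / (pdx u t x)^5
    + (5/3) * (pdx (pdx (pdx u)) t x) * (pdx (pdx u) t x) * (deriv f (u t x)) / (pdx u t x)^3
    + (9/8) * (pdx (pdx u) t x)^6 / (pdx u t x)^6 - (29/12) * (pdx (pdx u) t x)^4 * (f (u t x)) / (pdx u t x)^6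
    - (1/6) * (pdx (pdx u) t x)^3 * (deriv f (u t x)) / (pdx u t x)^4
    + (19/18) * (pdx (pdx u) t x)^2 * (f (u t x))^2 / (pdx u t x)^6
    - (5/6) * (pdx (pdx u) t x)^2 * (deriv (deriv f) (u t x)) / (pdx u t x)^2
    - (5/9) * (pdx (pdx u) t x) * (f (u t x)) * (deriv f (u t x)) / (pdx u t x)^4
    - (4/9) * (pdx (pdx u) t x) * (deriv (deriv (deriv f)) (u t x)) + (1/27) * (f (u t x))^3 / (pdx u t x)^6
    + (5/18) * (2 * (f (u t x)) * (deriv (deriv f) (u t x)) - (deriv f (u t x))^2) / (pdx u t x)^2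
    + (2/9) * (pdx u t x)^2 * (deriv (deriv (deriv (deriv f))) (u t x))

open Function

open scoped ContDiff

/-- Smoothness of a function of time and space, jointly in both variables. -/
abbrev JointlySmooth (u : ℝ → ℝ → ℝ) : Prop := ContDiff ℝ ∞ (uncurry u)

namespace JointlySmooth

variable {u : ℝ → ℝ → ℝ}

lemma hasDerivAt_space_fderiv (hu : JointlySmooth u) (t x : ℝ) :
    HasDerivAt (fun y => u t y) (fderiv ℝ (uncurry u) (t, x) (0, 1)) x := by
  have h := ((hu.differentiable (by simp)) (t, x)).hasFDerivAt
  exact h.comp_hasDerivAt x ((hasDerivAt_const x t).prodMk (hasDerivAt_id x))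

lemma hasDerivAt_time_fderiv (hu : JointlySmooth u) (t x : ℝ) :
    HasDerivAt (fun s => u s x) (fderiv ℝ (uncurry u) (t, x) (1, 0)) t := by
  have h := ((hu.differentiable (by simp)) (t, x)).hasFDerivAt
  exact h.comp_hasDerivAt t ((hasDerivAt_id t).prodMk (hasDerivAt_const t x))

lemma uncurry_pdx (hu : JointlySmooth u) :
    uncurry (pdx u) = fun p => fderiv ℝ (uncurry u) p (0, 1) :=
  funext fun p => (hu.hasDerivAt_space_fderiv p.1 p.2).deriv

lemma uncurry_pdt (hu : JointlySmooth u) :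
    uncurry (pdt u) = fun p => fderiv ℝ (uncurry u) p (1, 0) :=
  funext fun p => (hu.hasDerivAt_time_fderiv p.1 p.2).deriv

lemma pdx (hu : JointlySmooth u) : JointlySmooth (pdx u) := by
  rw [JointlySmooth, hu.uncurry_pdx]
  exact (hu.fderiv_right (m := ∞) (by simp)).clm_apply contDiff_const

lemma pdt (hu : JointlySmooth u) : JointlySmooth (pdt u) := by
  rw [JointlySmooth, hu.uncurry_pdt]
  exact (hu.fderiv_right (m := ∞) (by simp)).clm_apply contDiff_const

lemma hasDerivAt_pdx (hu : JointlySmooth u) (t x : ℝ) :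
    HasDerivAt (fun y => u t y) (_root_.pdx u t x) x :=
  (hu.hasDerivAt_space_fderiv t x).differentiableAt.hasDerivAt

lemma hasDerivAt_pdt (hu : JointlySmooth u) (t x : ℝ) :
    HasDerivAt (fun s => u s x) (_root_.pdt u t x) t :=
  (hu.hasDerivAt_time_fderiv t x).differentiableAt.hasDerivAt

/-- Equality of mixed partial derivatives. -/
lemma pdt_pdx (hu : JointlySmooth u) :
    _root_.pdt (_root_.pdx u) = _root_.pdx (_root_.pdt u) := by
  funext t x
  have hd : DifferentiableAt ℝ (fderiv ℝ (uncurry u)) (t, x) :=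
    (hu.fderiv_right (m := ∞) (by simp)).differentiable (by simp) (t, x)
  have hsymm : IsSymmSndFDerivAt ℝ (uncurry u) (t, x) :=
    hu.contDiffAt.isSymmSndFDerivAt (by simpa using WithTop.coe_le_coe.mpr (le_top : (2 : ℕ∞) ≤ ⊤))
  have hl := congrFun hu.pdx.uncurry_pdt (t, x)
  have hr := congrFun hu.pdt.uncurry_pdx (t, x)
  rw [hu.uncurry_pdx, fderiv_clm_apply hd (differentiableAt_const _)] at hl
  rw [hu.uncurry_pdt, fderiv_clm_apply hd (differentiableAt_const _)] at hr
  simp only [fderiv_fun_const, Pi.zero_apply, ContinuousLinearMap.comp_zero, zero_add,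
    ContinuousLinearMap.flip_apply, uncurry_apply_pair] at hl hr
  rw [hl, hr]
  exact hsymm (1, 0) (0, 1)

end JointlySmooth

/-- The derivative of a quartic polynomial, in a form closed under differentiation. -/
lemma deriv_quartic (a b c d e : ℝ) :
    deriv (fun v : ℝ => a * v ^ 4 + b * v ^ 3 + c * v ^ 2 + d * v + e) =
      fun v => 0 * v ^ 4 + (4 * a) * v ^ 3 + (3 * b) * v ^ 2 + (2 * c) * v + d := by
  funext v
  refine HasDerivAt.deriv ?_
  have h := (((((hasDerivAt_pow 4 v).const_mul a).add ((hasDerivAt_pow 3 v).const_mul b)).add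
    ((hasDerivAt_pow 2 v).const_mul c)).add ((hasDerivAt_id v).const_mul d)).add_const e
  refine h.congr_deriv ?_
  push_cast
  ring

section FlowDerivatives

variable {a b c d e g φ φ₁ φ₂ φ₃ φ₄ : ℝ → ℝ} {x : ℝ}

/-- First space derivative of the right-hand side of the equation; `a, b, c, d` stand for the
successive space derivatives of `u` and `φ, φ₁` for `f, f'` along `u`. -/
lemma hasDerivAt_flow (hx : a x ≠ 0) (ha : HasDerivAt a (b x) x) (hb : HasDerivAt b (c x) x)
    (hc : HasDerivAt c (d x) x) (hφ : HasDerivAt φ (φ₁ x * a x) x) :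
    HasDerivAt (fun y => c y - (3/2) * b y ^ 2 / a y + φ y / a y)
      (d x - 3 * b x * c x / a x + (3/2) * b x ^ 3 / a x ^ 2 + φ₁ x - φ x * b x / a x ^ 2) x := by
  have h := (hc.sub (((hb.pow 2).const_mul (3/2)).div ha hx)).add (hφ.div ha hx)
  refine h.congr_deriv ?_
  simp only [Pi.pow_apply]
  push_cast
  field_simp
  ring

/-- Second space derivative of the right-hand side of the equation. -/
lemma hasDerivAt_flow_deriv (hx : a x ≠ 0) (ha : HasDerivAt a (b x) x)
    (hb : HasDerivAt b (c x) x) (hc : HasDerivAt c (d x) x) (hd : HasDerivAt d (e x) x)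
    (hφ : HasDerivAt φ (φ₁ x * a x) x) (hφ₁ : HasDerivAt φ₁ (φ₂ x * a x) x) :
    HasDerivAt (fun y => d y - 3 * b y * c y / a y + (3/2) * b y ^ 3 / a y ^ 2 + φ₁ y
        - φ y * b y / a y ^ 2)
      (e x - 3 * c x ^ 2 / a x - 3 * b x * d x / a x + (15/2) * b x ^ 2 * c x / a x ^ 2
        - 3 * b x ^ 4 / a x ^ 3 + φ₂ x * a x - φ₁ x * b x / a x - φ x * c x / a x ^ 2
        + 2 * φ x * b x ^ 2 / a x ^ 3) x := by
  have hx2 : a x ^ 2 ≠ 0 := pow_ne_zero 2 hx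
  have h := (((hd.sub (((hb.const_mul 3).mul hc).div ha hx)).add
    (((hb.pow 3).const_mul (3/2)).div (ha.pow 2) hx2)).add hφ₁).sub
      ((hφ.mul hb).div (ha.pow 2) hx2)
  refine h.congr_deriv ?_
  simp only [Pi.pow_apply, Pi.mul_apply]
  push_cast
  field_simp
  ring

/-- Third space derivative of the right-hand side of the equation. -/
lemma hasDerivAt_flow_deriv_deriv (hx : a x ≠ 0) (ha : HasDerivAt a (b x) x)
    (hb : HasDerivAt b (c x) x) (hc : HasDerivAt c (d x) x) (hd : HasDerivAt d (e x) x)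
    (he : HasDerivAt e (g x) x) (hφ : HasDerivAt φ (φ₁ x * a x) x)
    (hφ₁ : HasDerivAt φ₁ (φ₂ x * a x) x) (hφ₂ : HasDerivAt φ₂ (φ₃ x * a x) x) :
    HasDerivAt (fun y => e y - 3 * c y ^ 2 / a y - 3 * b y * d y / a y
        + (15/2) * b y ^ 2 * c y / a y ^ 2 - 3 * b y ^ 4 / a y ^ 3 + φ₂ y * a y - φ₁ y * b y / a y
        - φ y * c y / a y ^ 2 + 2 * φ y * b y ^ 2 / a y ^ 3)
      (g x - 9 * c x * d x / a x + 18 * b x * c x ^ 2 / a x ^ 2 - 3 * b x * e x / a x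
        + (21/2) * b x ^ 2 * d x / a x ^ 2 - 27 * b x ^ 3 * c x / a x ^ 3 + 9 * b x ^ 5 / a x ^ 4
        + φ₃ x * a x ^ 2 - 2 * φ₁ x * c x / a x + 3 * φ₁ x * b x ^ 2 / a x ^ 2
        - φ x * d x / a x ^ 2 + 6 * φ x * b x * c x / a x ^ 3 - 6 * φ x * b x ^ 3 / a x ^ 4) x := by
  have hx2 : a x ^ 2 ≠ 0 := pow_ne_zero 2 hx
  have hx3 : a x ^ 3 ≠ 0 := pow_ne_zero 3 hx
  have h := (((((((he.sub (((hc.pow 2).const_mul 3).div ha hx)).sub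
    (((hb.const_mul 3).mul hd).div ha hx)).add
    ((((hb.pow 2).const_mul (15/2)).mul hc).div (ha.pow 2) hx2)).sub
    (((hb.pow 4).const_mul 3).div (ha.pow 3) hx3)).add (hφ₂.mul ha)).sub
    ((hφ₁.mul hb).div ha hx)).sub ((hφ.mul hc).div (ha.pow 2) hx2)).add
    (((hφ.const_mul 2).mul (hb.pow 2)).div (ha.pow 3) hx3)
  refine h.congr_deriv ?_
  simp only [Pi.pow_apply, Pi.mul_apply]
  push_cast
  field_simp
  ring

/-- Derivative of the density along an arbitrary one-parameter variation. -/
lemma hasDerivAt_density {a' b' c' φ' φ₂' : ℝ} (hx : a x ≠ 0) (ha : HasDerivAt a a' x)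
    (hb : HasDerivAt b b' x) (hc : HasDerivAt c c' x) (hφ : HasDerivAt φ φ' x)
    (hφ₂ : HasDerivAt φ₂ φ₂' x) :
    HasDerivAt (fun y => (1/2) * c y ^ 2 / a y ^ 2 - (3/8) * b y ^ 4 / a y ^ 4
        + (5/6) * b y ^ 2 * φ y / a y ^ 4 + (1/18) * φ y ^ 2 / a y ^ 4 - (5/9) * φ₂ y)
      (c x * c' / a x ^ 2 - c x ^ 2 * a' / a x ^ 3 - (3/2) * b x ^ 3 * b' / a x ^ 4
        + (3/2) * b x ^ 4 * a' / a x ^ 5 + (5/3) * b x * b' * φ x / a x ^ 4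
        + (5/6) * b x ^ 2 * φ' / a x ^ 4 - (10/3) * b x ^ 2 * φ x * a' / a x ^ 5
        + (1/9) * φ x * φ' / a x ^ 4 - (2/9) * φ x ^ 2 * a' / a x ^ 5 - (5/9) * φ₂') x := by
  have hx2 : a x ^ 2 ≠ 0 := pow_ne_zero 2 hx
  have hx4 : a x ^ 4 ≠ 0 := pow_ne_zero 4 hx
  have h := ((((((hc.pow 2).const_mul (1/2)).div (ha.pow 2) hx2).sub
    (((hb.pow 4).const_mul (3/8)).div (ha.pow 4) hx4)).add
    ((((hb.pow 2).const_mul (5/6)).mul hφ).div (ha.pow 4) hx4)).add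
    (((hφ.pow 2).const_mul (1/18)).div (ha.pow 4) hx4)).sub (hφ₂.const_mul (5/9))
  refine h.congr_deriv ?_
  simp only [Pi.pow_apply, Pi.mul_apply]
  push_cast
  field_simp
  ring

/-- Space derivative of the flux, as minus the derivative of the density along the flow. -/
lemma hasDerivAt_flux {a' b' c' φ' φ₂' : ℝ} (hx : a x ≠ 0) (ha : HasDerivAt a (b x) x)
    (hb : HasDerivAt b (c x) x) (hc : HasDerivAt c (d x) x) (hd : HasDerivAt d (e x) x)
    (he : HasDerivAt e (g x) x) (hφ : HasDerivAt φ (φ₁ x * a x) x)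
    (hφ₁ : HasDerivAt φ₁ (φ₂ x * a x) x) (hφ₂ : HasDerivAt φ₂ (φ₃ x * a x) x)
    (hφ₃ : HasDerivAt φ₃ (φ₄ x * a x) x) (hφ₄ : HasDerivAt φ₄ 0 x)
    (ha' : a' = d x - 3 * b x * c x / a x + (3/2) * b x ^ 3 / a x ^ 2 + φ₁ x
      - φ x * b x / a x ^ 2)
    (hb' : b' = e x - 3 * c x ^ 2 / a x - 3 * b x * d x / a x + (15/2) * b x ^ 2 * c x / a x ^ 2
      - 3 * b x ^ 4 / a x ^ 3 + φ₂ x * a x - φ₁ x * b x / a x - φ x * c x / a x ^ 2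
      + 2 * φ x * b x ^ 2 / a x ^ 3)
    (hc' : c' = g x - 9 * c x * d x / a x + 18 * b x * c x ^ 2 / a x ^ 2 - 3 * b x * e x / a x
      + (21/2) * b x ^ 2 * d x / a x ^ 2 - 27 * b x ^ 3 * c x / a x ^ 3 + 9 * b x ^ 5 / a x ^ 4
      + φ₃ x * a x ^ 2 - 2 * φ₁ x * c x / a x + 3 * φ₁ x * b x ^ 2 / a x ^ 2
      - φ x * d x / a x ^ 2 + 6 * φ x * b x * c x / a x ^ 3 - 6 * φ x * b x ^ 3 / a x ^ 4)
    (hφ' : φ' = φ₁ x * (c x - (3/2) * b x ^ 2 / a x + φ x / a x))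
    (hφ₂' : φ₂' = φ₃ x * (c x - (3/2) * b x ^ 2 / a x + φ x / a x)) :
    HasDerivAt (fun y => -(e y * c y / a y ^ 2) + (1/2) * d y ^ 2 / a y ^ 2
        + d y * c y * b y / a y ^ 3
        + (1/6) * d y * b y * (9 * b y ^ 2 - 10 * φ y) / a y ^ 4
        + 3 * c y ^ 3 / a y ^ 3
        - (2/3) * c y ^ 2 * (9 * b y ^ 2 - 2 * φ y) / a y ^ 4
        + (1/9) * c y * (15 * b y ^ 2 + 2 * φ y) * φ y / a y ^ 5
        + (5/3) * c y * b y * φ₁ y / a y ^ 3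
        + (9/8) * b y ^ 6 / a y ^ 6 - (29/12) * b y ^ 4 * φ y / a y ^ 6
        - (1/6) * b y ^ 3 * φ₁ y / a y ^ 4
        + (19/18) * b y ^ 2 * φ y ^ 2 / a y ^ 6
        - (5/6) * b y ^ 2 * φ₂ y / a y ^ 2
        - (5/9) * b y * φ y * φ₁ y / a y ^ 4
        - (4/9) * b y * φ₃ y + (1/27) * φ y ^ 3 / a y ^ 6
        + (5/18) * (2 * φ y * φ₂ y - φ₁ y ^ 2) / a y ^ 2
        + (2/9) * a y ^ 2 * φ₄ y)
      (-(c x * c' / a x ^ 2 - c x ^ 2 * a' / a x ^ 3 - (3/2) * b x ^ 3 * b' / a x ^ 4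
        + (3/2) * b x ^ 4 * a' / a x ^ 5 + (5/3) * b x * b' * φ x / a x ^ 4
        + (5/6) * b x ^ 2 * φ' / a x ^ 4 - (10/3) * b x ^ 2 * φ x * a' / a x ^ 5
        + (1/9) * φ x * φ' / a x ^ 4 - (2/9) * φ x ^ 2 * a' / a x ^ 5 - (5/9) * φ₂')) x := by
  have hne (n : ℕ) : a x ^ n ≠ 0 := pow_ne_zero n hx
  have h := (((((((((((((((((((he.mul hc).div (ha.pow 2) (hne 2)).neg).add
    (((hd.pow 2).const_mul (1/2)).div (ha.pow 2) (hne 2))).add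
    (((hd.mul hc).mul hb).div (ha.pow 3) (hne 3))).add
    ((((hd.const_mul (1/6)).mul hb).mul (((hb.pow 2).const_mul 9).sub (hφ.const_mul 10))).div
      (ha.pow 4) (hne 4))).add
    (((hc.pow 3).const_mul 3).div (ha.pow 3) (hne 3))).sub
    ((((hc.pow 2).const_mul (2/3)).mul (((hb.pow 2).const_mul 9).sub (hφ.const_mul 2))).div
      (ha.pow 4) (hne 4))).add
    ((((hc.const_mul (1/9)).mul (((hb.pow 2).const_mul 15).add (hφ.const_mul 2))).mul hφ).div
      (ha.pow 5) (hne 5))).add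
    ((((hc.const_mul (5/3)).mul hb).mul hφ₁).div (ha.pow 3) (hne 3))).add
    (((hb.pow 6).const_mul (9/8)).div (ha.pow 6) (hne 6))).sub
    ((((hb.pow 4).const_mul (29/12)).mul hφ).div (ha.pow 6) (hne 6))).sub
    ((((hb.pow 3).const_mul (1/6)).mul hφ₁).div (ha.pow 4) (hne 4))).add
    ((((hb.pow 2).const_mul (19/18)).mul (hφ.pow 2)).div (ha.pow 6) (hne 6))).sub
    ((((hb.pow 2).const_mul (5/6)).mul hφ₂).div (ha.pow 2) (hne 2))).sub
    ((((hb.const_mul (5/9)).mul hφ).mul hφ₁).div (ha.pow 4) (hne 4))).sub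
    ((hb.const_mul (4/9)).mul hφ₃)).add
    (((hφ.pow 3).const_mul (1/27)).div (ha.pow 6) (hne 6))).add
    (((((hφ.const_mul 2).mul hφ₂).sub (hφ₁.pow 2)).const_mul (5/18)).div (ha.pow 2) (hne 2))).add
    (((ha.pow 2).const_mul (2/9)).mul hφ₄)
  refine h.congr_deriv ?_
  subst ha' hb' hc' hφ' hφ₂'
  simp only [Pi.pow_apply, Pi.mul_apply, Pi.sub_apply, Pi.add_apply]
  push_cast
  field_simp
  ring

end FlowDerivatives

/-- `(T₂ₐ, X₂ₐ)` is a conservation law of the KN equation (quartic `f`). -/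
theorem KN_conservation_law_T2a (C₁ C₂ C₃ C₄ C₅ : ℝ) (f : ℝ → ℝ)
    (hf : ∀ v, f v = C₁ * v^4 + C₂ * v^3 + C₃ * v^2 + C₄ * v + C₅)
    (u : ℝ → ℝ → ℝ) (hu : ContDiff ℝ (⊤ : ℕ∞) (Function.uncurry u))
    (hux : ∀ t x, pdx u t x ≠ 0)
    (hsol : isGKN f u) :
    consLaw (T2a f u) (X2a f u) := by
  have h0 : JointlySmooth u := hu
  have h1 := h0.pdx
  have h2 := h1.pdx
  have h3 := h2.pdx
  have h4 := h3.pdx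
  have h5 := h4.pdx
  have hquartic : f = fun v => C₁ * v^4 + C₂ * v^3 + C₃ * v^2 + C₄ * v + C₅ := funext hf
  have hsmooth : ContDiff ℝ ∞ f := by
    rw [hquartic]
    fun_prop
  have hderiv {q : ℝ → ℝ} (hq : ContDiff ℝ ∞ q) : ContDiff ℝ ∞ (deriv q) :=
    (contDiff_infty_iff_deriv.mp hq).2
  have hchain {q w : ℝ → ℝ} {w' z : ℝ} (hq : ContDiff ℝ ∞ q) (hw : HasDerivAt w w' z) :
      HasDerivAt (fun y => q (w y)) (deriv q (w z) * w') z :=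
    ((hq.differentiable (by simp)) (w z)).hasDerivAt.comp z hw
  have hs1 := hderiv hsmooth
  have hs2 := hderiv hs1
  have hs3 := hderiv hs2
  have hconst : deriv (deriv (deriv (deriv f))) = fun _ => 24 * C₁ := by
    simp only [hquartic, deriv_quartic]
    funext v
    ring
  intro t x
  have ha y := h1.hasDerivAt_pdx t y
  have hb y := h2.hasDerivAt_pdx t y
  have hc y := h3.hasDerivAt_pdx t y
  have hd y := h4.hasDerivAt_pdx t y
  have he y := h5.hasDerivAt_pdx t y
  have hφ y := hchain hsmooth (h0.hasDerivAt_pdx t y)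
  have hφ₁ y := hchain hs1 (h0.hasDerivAt_pdx t y)
  have hφ₂ y := hchain hs2 (h0.hasDerivAt_pdx t y)
  have hφ₃ y := hchain hs3 (h0.hasDerivAt_pdx t y)
  have hφ₄ : HasDerivAt (fun y => deriv (deriv (deriv (deriv f))) (u t y)) 0 x := by
    rw [hconst]
    exact hasDerivAt_const x _
  have ht0 y := hsol t y
  have ht1 y := (congrFun₂ h0.pdt_pdx t y).trans
    ((hasDerivAt_flow (d := pdx (pdx (pdx (pdx u))) t) (φ₁ := fun y => deriv f (u t y))
      (hux t y) (ha y) (hb y) (hc y) (hφ y)).congr_of_eventuallyEq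
      (.of_forall ht0)).deriv
  have ht2 y := (congrFun₂ h1.pdt_pdx t y).trans
    ((hasDerivAt_flow_deriv (e := pdx (pdx (pdx (pdx (pdx u)))) t)
      (φ₂ := fun y => deriv (deriv f) (u t y)) (hux t y) (ha y) (hb y) (hc y) (hd y) (hφ y)
      (hφ₁ y)).congr_of_eventuallyEq (.of_forall ht1)).deriv
  have ht3 := (congrFun₂ h2.pdt_pdx t x).trans
    ((hasDerivAt_flow_deriv_deriv (g := pdx (pdx (pdx (pdx (pdx (pdx u))))) t)
      (φ₃ := fun y => deriv (deriv (deriv f)) (u t y)) (hux t x) (ha x) (hb x) (hc x) (hd x)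
      (he x) (hφ x) (hφ₁ x) (hφ₂ x)).congr_of_eventuallyEq (.of_forall ht2)).deriv
  have hT := hasDerivAt_density (a := fun s => pdx u s x) (hux t x) (h1.hasDerivAt_pdt t x)
    (h2.hasDerivAt_pdt t x) (h3.hasDerivAt_pdt t x) (hchain hsmooth (h0.hasDerivAt_pdt t x))
    (hchain hs2 (h0.hasDerivAt_pdt t x))
  have ht_f : deriv f (u t x) * pdt u t x = _ := congrArg (deriv f (u t x) * ·) (ht0 x)
  have ht_f₂ : deriv (deriv (deriv f)) (u t x) * pdt u t x = _ :=
    congrArg (deriv (deriv (deriv f)) (u t x) * ·) (ht0 x)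
  have hX := hasDerivAt_flux (a := pdx u t) (b := pdx (pdx u) t) (c := pdx (pdx (pdx u)) t)
    (d := pdx (pdx (pdx (pdx u))) t) (e := pdx (pdx (pdx (pdx (pdx u)))) t)
    (g := pdx (pdx (pdx (pdx (pdx (pdx u))))) t) (φ := fun y => f (u t y))
    (φ₁ := fun y => deriv f (u t y)) (φ₂ := fun y => deriv (deriv f) (u t y))
    (φ₃ := fun y => deriv (deriv (deriv f)) (u t y))
    (φ₄ := fun y => deriv (deriv (deriv (deriv f))) (u t y)) (hux t x) (ha x) (hb x) (hc x) (hd x)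
    (he x) (hφ x) (hφ₁ x) (hφ₂ x) (hφ₃ x) hφ₄ (ht1 x) (ht2 x) ht3 ht_f ht_f₂
  exact (congrArg₂ (· + ·) hT.deriv hX.deriv).trans (add_neg_cancel _)
end
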